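/- The 6-element set {0,1} × {0,1,2} ⊆ ℕ^2 is not coverable; that is, for every partition of {0,1} × {0,1,2} into sets S_1 and S_2, either S_1 contains two distinct points with the same second coordinate or S_2 contains two distinct points with the same first coordinate. Consequently h(ℕ^2) = 5. -/

import Mathlib

/-- A winning guessing strategy in the hat guessing game on `G` with `q` colors:
each vertex `v` gets a guessing function from colorings of its open neighborhood
to colors, such that for every coloring some vertex guesses its own color. -/
def HatWinning {V : Type*} (G : SimpleGraph V) (q : ℕ) : Prop :=
  ∃ g : (v : V) → ({w : V // G.Adj v w} → Fin q) → Fin q,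
    ∀ χ : V → Fin q, ∃ v : V, g v (fun w => χ w.1) = χ v

/-- The hat guessing number of `G`: the largest number of colors for which the
players have a winning strategy. -/
noncomputable def hatGuessingNumber {V : Type*} (G : SimpleGraph V) : ℕ :=
  sSup {q : ℕ | HatWinning G q}

/-- Sylvester's sequence: `s 0 = 2`, `s (n+1) = s n ^ 2 - s n + 1`. -/
def sylvester : ℕ → ℕ
  | 0 => 2
  | n + 1 => sylvester n ^ 2 - sylvester n + 1

/-- The graph `G_d(N)`: vertices are the vertices of the complete rooted `N`-ary
tree of depth `d` (encoded as lists of child-indices of length at most `d`), and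
each vertex is adjacent to all of its ancestors (its proper prefixes). -/
def ancTree (d N : ℕ) : SimpleGraph {l : List (Fin N) // l.length ≤ d} where
  Adj v w := v ≠ w ∧ (v.1 <+: w.1 ∨ w.1 <+: v.1)
  symm := by
    constructor
    intro v w h
    exact ⟨h.1.symm, h.2.symm⟩
  loopless := by
    constructor
    intro v h
    exact h.1 rfl

/-- The book graph `B_{d,n}`: a spine of `d` vertices forming a clique, completely
joined to `n` pages forming an independent set. -/
def bookGraph (d n : ℕ) : SimpleGraph (Fin d ⊕ Fin n) where
  Adj x y := x ≠ y ∧ (x.isLeft ∨ y.isLeft)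
  symm := by
    constructor
    intro x y h
    exact ⟨h.1.symm, h.2.symm⟩
  loopless := by
    constructor
    intro x h
    exact h.1 rfl

/-- A set `S ⊆ ℕ^d` is coverable if it can be partitioned into parts `S_1, …, S_d`
such that `S_i` contains at most one point on every line parallel to the `i`-th
coordinate axis, i.e. two distinct points in part `i` differ in some coordinate
other than the `i`-th. -/
def Coverable {d : ℕ} (S : Set (Fin d → ℕ)) : Prop :=
  ∃ f : (Fin d → ℕ) → Fin d, ∀ x ∈ S, ∀ y ∈ S,
    x ≠ y → f x = f y → ∃ j : Fin d, j ≠ f x ∧ x j ≠ y j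

/-- `hcov d` is `h(ℕ^d)`: the largest `t` such that every `t`-element subset of
`ℕ^d` is coverable. -/
noncomputable def hcov (d : ℕ) : ℕ :=
  sSup {t : ℕ | ∀ S : Set (Fin d → ℕ), S.Finite → S.ncard = t → Coverable S}

/-- `p` is a left-to-right path with `k` edges in a graph on `Fin n` with the
natural vertex ordering: a strictly increasing sequence of `k+1` vertices in which
consecutive vertices are adjacent. -/
def IsLTRPath {n : ℕ} (G : SimpleGraph (Fin n)) (k : ℕ) (p : Fin (k + 1) → Fin n) : Prop :=
  StrictMono p ∧ ∀ i : Fin k, G.Adj (p i.castSucc) (p i.succ)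

/-- The depth of a vertex `v`: the largest number of edges in a left-to-right path
ending at `v`. -/
noncomputable def ltrDepth {n : ℕ} (G : SimpleGraph (Fin n)) (v : Fin n) : ℕ :=
  sSup {k : ℕ | ∃ p : Fin (k + 1) → Fin n, IsLTRPath G k p ∧ p (Fin.last k) = v}
theorem Coverable.mono {d : ℕ} {S T : Set (Fin d → ℕ)} (h : S ⊆ T) (hT : Coverable T) :
    Coverable S := by
  obtain ⟨f, hf⟩ := hT
  exact ⟨f, fun x hx y hy => hf x (h hx) y (h hy)⟩

theorem not_coverable_grid_two_three :
    ¬ Coverable {x : Fin 2 → ℕ | x 0 ≤ 1 ∧ x 1 ≤ 2} := by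
  rintro ⟨f, hf⟩
  have row (b : ℕ) (hb : b ≤ 2) : f ![0, b] = 1 ∨ f ![1, b] = 1 := by
    by_contra! h
    have h0 : f ![0, b] = 0 := by have := h.1; lia
    have h1 : f ![1, b] = 0 := by have := h.2; lia
    obtain ⟨j, hj, hne⟩ := hf ![0, b] (by simpa using hb) ![1, b] (by simpa using hb)
      (fun e => by simpa using congrFun e 0) (h0.trans h1.symm)
    rw [h0] at hj
    fin_cases j <;> simp at hj hne
  have col (a b c : ℕ) (ha : a ≤ 1) (hb : b ≤ 2) (hc : c ≤ 2) (hbc : b ≠ c)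
      (h0 : f ![a, b] = 1) (h1 : f ![a, c] = 1) : False := by
    obtain ⟨j, hj, hne⟩ := hf ![a, b] (by simp [ha, hb]) ![a, c] (by simp [ha, hc])
      (fun e => hbc (by simpa using congrFun e 1)) (h0.trans h1.symm)
    rw [h0] at hj
    fin_cases j <;> simp at hj hne
  have c01 (a : ℕ) (ha : a ≤ 1) := col a 0 1 ha (by simp) (by simp) (by simp)
  have c02 (a : ℕ) (ha : a ≤ 1) := col a 0 2 ha (by simp) (by simp) (by simp)
  have c12 (a : ℕ) (ha : a ≤ 1) := col a 1 2 ha (by simp) (by simp) (by simp)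
  rcases row 0 (by simp) with h0 | h0 <;> rcases row 1 (by simp) with h1 | h1 <;>
    rcases row 2 (by simp) with h2 | h2 <;>
    first
    | exact c01 _ (by simp) h0 h1
    | exact c02 _ (by simp) h0 h2
    | exact c12 _ (by simp) h1 h2

theorem card_le_card_image_add_card_image (A : Finset (Fin 2 → ℕ)) (hA : A.card ≤ 5) :
    A.card ≤ (A.image (· 1)).card + (A.image (· 0)).card := by
  have hmul : A.card ≤ (A.image (· 1)).card * (A.image (· 0)).card := by
    rw [← Finset.card_product]
    refine Finset.card_le_card_of_injOn (fun x => (x 1, x 0)) (fun x hx => ?_) ?_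
    · have hx : x ∈ A := hx
      simp only [Finset.coe_product, Set.mem_prod, Finset.mem_coe]
      exact ⟨Finset.mem_image_of_mem _ hx, Finset.mem_image_of_mem _ hx⟩
    · intro x _ y _ h
      rw [Prod.mk.injEq] at h
      funext i
      fin_cases i
      exacts [h.2, h.1]
  generalize (A.image (· 1)).card = a at *
  generalize (A.image (· 0)).card = b at *
  by_contra! h
  have ha : a ≤ 4 := by lia
  have hb : b ≤ 4 := by lia
  interval_cases a <;> interval_cases b <;> lia

/-- By Hall's theorem, the points of `S` have distinct representatives among the lines
through them; each point is then assigned the direction of its line. -/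
theorem coverable_of_card_le_five (S : Finset (Fin 2 → ℕ)) (hS : S.card ≤ 5) :
    Coverable (S : Set (Fin 2 → ℕ)) := by
  let lines : S → Finset (ℕ ⊕ ℕ) := fun x => {Sum.inl (x.1 1), Sum.inr (x.1 0)}
  have hall : ∀ A : Finset S, A.card ≤ (A.biUnion lines).card := by
    intro A
    let B := A.map (Function.Embedding.subtype _)
    have hBA : B.card = A.card := Finset.card_map _
    have hBS : B.card ≤ 5 :=
      (Finset.card_le_card fun x hx => by
        obtain ⟨y, _, rfl⟩ := Finset.mem_map.1 hx
        exact y.2).trans hS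
    rw [← hBA]
    refine (card_le_card_image_add_card_image B hBS).trans ?_
    rw [← Finset.card_disjSum]
    refine Finset.card_le_card fun z hz => ?_
    simp only [Finset.mem_disjSum, Finset.mem_image, B, Finset.mem_map] at hz
    rw [Finset.mem_biUnion]
    rcases hz with ⟨_, ⟨_, ⟨x, hx, rfl⟩, rfl⟩, rfl⟩ | ⟨_, ⟨_, ⟨x, hx, rfl⟩, rfl⟩, rfl⟩ <;>
      exact ⟨x, hx, by simp [lines]⟩
  obtain ⟨g, hg, hmem⟩ := (Finset.all_card_le_biUnion_card_iff_exists_injective lines).1 hall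
  classical
  refine ⟨fun x => if h : x ∈ S then (if (g ⟨x, h⟩).isLeft then 0 else 1) else 0, ?_⟩
  intro x hx y hy hxy hc
  have hx : x ∈ S := hx
  have hy : y ∈ S := hy
  have hne : g ⟨x, hx⟩ ≠ g ⟨y, hy⟩ := fun h => hxy (congrArg Subtype.val (hg h))
  have mx := hmem ⟨x, hx⟩
  have my := hmem ⟨y, hy⟩
  simp only [hx, hy, dite_true] at hc ⊢
  simp only [lines, Finset.mem_insert, Finset.mem_singleton] at mx my
  rcases mx with mx | mx <;> rcases my with my | my <;>
    rw [mx, my] at hne <;> simp [mx, my] at hc hne ⊢ <;> exact hne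

theorem exists_not_coverable_of_six_le {t : ℕ} (ht : 6 ≤ t) :
    ∃ T : Finset (Fin 2 → ℕ), T.card = t ∧ ¬ Coverable (T : Set (Fin 2 → ℕ)) := by
  let grid : Finset (Fin 2 → ℕ) :=
    (Finset.range 2 ×ˢ Finset.range 3).image fun p => ![p.1, p.2]
  have hgrid : grid.card ≤ t := Finset.card_image_le.trans (by simpa using ht)
  obtain ⟨T, hT, hcard⟩ := Infinite.exists_superset_card_eq grid t hgrid
  refine ⟨T, hcard, fun h => not_coverable_grid_two_three (h.mono ?_)⟩
  rintro x ⟨h0, h1⟩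
  refine hT (Finset.mem_image.2 ⟨(x 0, x 1), ?_, ?_⟩)
  · simp only [Finset.mem_product, Finset.mem_range]
    lia
  · funext i
    fin_cases i <;> rfl

/-- The `6`-element set `{0,1} × {0,1,2} ⊆ ℕ^2` is not coverable; consequently
`h(ℕ^2) = 5`. -/
theorem not_coverable_two_by_three :
    ¬ Coverable {x : Fin 2 → ℕ | x 0 ≤ 1 ∧ x 1 ≤ 2} ∧ hcov 2 = 5 := by
  refine ⟨not_coverable_grid_two_three, IsGreatest.csSup_eq ⟨?_, ?_⟩⟩
  · intro S hfin hcard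
    lift S to Finset (Fin 2 → ℕ) using hfin
    rw [Set.ncard_coe_finset] at hcard
    exact coverable_of_card_le_five S hcard.le
  · intro t ht
    by_contra! h
    obtain ⟨T, hT, hnot⟩ := exists_not_coverable_of_six_le h
    exact hnot (ht T T.finite_toSet (by rw [Set.ncard_coe_finset, hT]))
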